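/- Let x ∈ B^n have MSA orbit defined for all times with purely periodic expansion S^p x = x (p ≥ 1), with digits k_1, …, k_p, and set K := (1 + max(k_1,…,k_p))². Then for every s ≥ 0 and every i ∈ {1,…,n}, the ratio of row sums of β^{(s)} satisfies 1/K ≤ (Σ_{g=0}^{n} (β^{(s)})_{i,g}) / (Σ_{g=0}^{n} (β^{(s)})_{0,g}) ≤ K; in particular these ratios are bounded away from 0 and ∞ uniformly in s. -/

import Mathlib

open Matrix Filter

/-- Entry access with junk value `0` outside the index range: `ent x m = x_{m+1}`
(0-based coordinate `m`) for `m < n`, and `0` otherwise. -/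
noncomputable def ent {n : ℕ} (x : Fin n → ℝ) (m : ℕ) : ℝ :=
  if h : m < n then x ⟨m, h⟩ else 0

/-- `B^n = {x ∈ ℝ^n : 1 ≥ x₁ ≥ x₂ ≥ ⋯ ≥ x_n ≥ 0}` (the stated antitonicity of
the `0`-extended sequence `ent x` encodes both the ordering and `x_n ≥ 0`). -/
def Bset (n : ℕ) : Set (Fin n → ℝ) :=
  {x | ent x 0 ≤ 1 ∧ ∀ i j : ℕ, i ≤ j → ent x j ≤ ent x i}

/-- The MSA digit `k = ⌊1/x_n⌋`. -/
noncomputable def msaDigit {n : ℕ} (x : Fin n → ℝ) : ℤ :=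
  ⌊(ent x (n - 1))⁻¹⌋

/-- The multiplicative Selmer algorithm (MSA) map
`S(x₁,…,x_n) = (x₂/x₁, …, x_n/x₁, (1 − k·x_n)/x₁)` with `k = ⌊1/x_n⌋`. -/
noncomputable def msaS {n : ℕ} (x : Fin n → ℝ) : Fin n → ℝ := fun i =>
  if (i : ℕ) + 1 < n then ent x ((i : ℕ) + 1) / ent x 0
  else (1 - (msaDigit x : ℝ) * ent x (n - 1)) / ent x 0

/-- The Selmer matrix `β(k)`: the `(n+1)×(n+1)` real matrix (rows and columns indexed by
`0,…,n`) whose only nonzero entries are `β(k)_{0,n−1} = k`, `β(k)_{0,n} = 1`, and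
`β(k)_{i,i−1} = 1` for `1 ≤ i ≤ n`. -/
noncomputable def selmerBeta (n : ℕ) (k : ℤ) : Matrix (Fin (n + 1)) (Fin (n + 1)) ℝ :=
  Matrix.of fun i j =>
    if (i : ℕ) = 0 ∧ (j : ℕ) = n - 1 then (k : ℝ)
    else if (i : ℕ) = 0 ∧ (j : ℕ) = n then 1
    else if (j : ℕ) + 1 = (i : ℕ) then 1 else 0

/-- `β^{(s)} = β(k₁)β(k₂)⋯β(k_s)` for the MSA digits `k_s = ⌊1/(S^{s−1}x)_n⌋` of `x`
(with `β^{(0)}` the identity matrix). -/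
noncomputable def msaBeta (n : ℕ) (x : Fin n → ℝ) (s : ℕ) :
    Matrix (Fin (n + 1)) (Fin (n + 1)) ℝ :=
  ((List.range s).map fun t => selmerBeta n (msaDigit (msaS^[t] x))).prod

/-! Homogenise `x` to the vector `(1, x₁, …, xₙ)`. The matrix `β(k)` undoes one step of the
algorithm up to a scalar, so `β⁽ˢ⁾ (1, Sˢx) = c • (1, x)` with `c > 0`. Because `β⁽ˢ⁾` is
nonnegative and the entries of `(1, Sˢx)` lie between its last entry `y` and `1`, each row sum of
`β⁽ˢ⁾` agrees, up to a factor in `[1, y⁻¹]`, with the corresponding entry of `c • (1, x)`; hence the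
ratio of row sums lies between `y * xᵢ` and `y⁻¹ * xᵢ`. If the digits of `x` and `Sˢx` are at most
`k`, then `xᵢ` and `y` are at least `(1 + k)⁻¹`. -/

section RowSums

variable {R 𝕜 ι κ : Type*} [Fintype κ]

lemma sum_row_mul_le_mulVec [Semiring R] [PartialOrder R] [IsOrderedRing R] {M : Matrix ι κ R}
    {v : κ → R} {a : R} (hM : ∀ i j, 0 ≤ M i j) (hv : ∀ j, a ≤ v j) (i : ι) :
    (∑ j, M i j) * a ≤ (M *ᵥ v) i := by
  rw [Finset.sum_mul]
  exact Finset.sum_le_sum fun j _ => mul_le_mul_of_nonneg_left (hv j) (hM i j)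

lemma mulVec_le_sum_row_mul [Semiring R] [PartialOrder R] [IsOrderedRing R] {M : Matrix ι κ R}
    {v : κ → R} {b : R} (hM : ∀ i j, 0 ≤ M i j) (hv : ∀ j, v j ≤ b) (i : ι) :
    (M *ᵥ v) i ≤ (∑ j, M i j) * b := by
  rw [Finset.sum_mul]
  exact Finset.sum_le_sum fun j _ => mul_le_mul_of_nonneg_left (hv j) (hM i j)

lemma sum_row_div_sum_row_mem_Icc [Field 𝕜] [LinearOrder 𝕜] [IsStrictOrderedRing 𝕜]
    {M : Matrix ι κ 𝕜} {v : κ → 𝕜} {a b : 𝕜} (hM : ∀ i j, 0 ≤ M i j) (ha : 0 < a)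
    (hv : ∀ j, v j ∈ Set.Icc a b) (i : ι) {i₀ : ι} (hi₀ : 0 < (M *ᵥ v) i₀) :
    (∑ j, M i j) / (∑ j, M i₀ j) ∈
      Set.Icc (a / b * ((M *ᵥ v) i / (M *ᵥ v) i₀)) (b / a * ((M *ᵥ v) i / (M *ᵥ v) i₀)) := by
  have lower (l : ι) : (∑ j, M l j) * a ≤ (M *ᵥ v) l :=
    sum_row_mul_le_mulVec hM (fun j => (hv j).1) l
  have upper (l : ι) : (M *ᵥ v) l ≤ (∑ j, M l j) * b :=
    mulVec_le_sum_row_mul hM (fun j => (hv j).2) l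
  have sum_nonneg (l : ι) : 0 ≤ ∑ j, M l j := Finset.sum_nonneg fun j _ => hM l j
  have hb : 0 < b := pos_of_mul_pos_right (hi₀.trans_le (upper i₀)) (sum_nonneg i₀)
  have sum_pos : 0 < ∑ j, M i₀ j := pos_of_mul_pos_left (hi₀.trans_le (upper i₀)) hb.le
  rw [div_mul_div_comm, div_mul_div_comm]
  constructor
  · rw [div_le_div_iff₀ (by positivity) sum_pos]
    calc a * (M *ᵥ v) i * ∑ j, M i₀ j
      _ = (M *ᵥ v) i * ((∑ j, M i₀ j) * a) := by ring
      _ ≤ (∑ j, M i j) * b * (M *ᵥ v) i₀ :=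
        mul_le_mul (upper i) (lower i₀) (mul_pos sum_pos ha).le (mul_nonneg (sum_nonneg i) hb.le)
      _ = (∑ j, M i j) * (b * (M *ᵥ v) i₀) := by ring
  · rw [div_le_div_iff₀ sum_pos (by positivity)]
    calc (∑ j, M i j) * (a * (M *ᵥ v) i₀)
      _ = (∑ j, M i j) * a * (M *ᵥ v) i₀ := by ring
      _ ≤ (M *ᵥ v) i * ((∑ j, M i₀ j) * b) :=
        mul_le_mul (lower i) (upper i₀) hi₀.le
          ((mul_nonneg (sum_nonneg i) ha.le).trans (lower i))
      _ = b * (M *ᵥ v) i * ∑ j, M i₀ j := by ring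

end RowSums

lemma forall_iterate_of_isPeriodicPt {α : Type*} {f : α → α} {x : α} {p : ℕ} (P : α → Prop)
    (hp : 0 < p) (hper : Function.IsPeriodicPt f p x) (h : ∀ t < p, P (f^[t] x)) (t : ℕ) :
    P (f^[t] x) := by
  rw [← hper.iterate_mod_apply t]
  exact h _ (Nat.mod_lt t hp)

lemma antitone_snoc {α : Type*} [Preorder α] {m : ℕ} {f : Fin (m + 1) → α} {a : α}
    (hf : Antitone f) (ha : a ≤ f (Fin.last m)) :
    Antitone (Fin.snoc f a : Fin (m + 2) → α) := by
  refine Fin.antitone_iff_succ_le.2 fun i => ?_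
  cases i using Fin.lastCases with
  | last => simpa only [Fin.succ_last, Fin.snoc_last, Fin.snoc_castSucc] using ha
  | cast i =>
    simpa only [Fin.succ_castSucc, Fin.snoc_castSucc] using hf (Fin.castSucc_lt_succ (i := i)).le

lemma ent_val {n : ℕ} (x : Fin n → ℝ) (i : Fin n) : ent x i = x i :=
  dif_pos i.isLt

lemma ent_of_le {n m : ℕ} (x : Fin n → ℝ) (h : n ≤ m) : ent x m = 0 :=
  dif_neg h.not_gt

lemma selmerBeta_nonneg (n : ℕ) {k : ℤ} (hk : 0 ≤ k) (i j : Fin (n + 1)) :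
    0 ≤ selmerBeta n k i j := by
  have : (0 : ℝ) ≤ k := Int.cast_nonneg hk
  simp only [selmerBeta, Matrix.of_apply]
  positivity

lemma msaBeta_zero (n : ℕ) (x : Fin n → ℝ) : msaBeta n x 0 = 1 := rfl

lemma msaBeta_succ (n : ℕ) (x : Fin n → ℝ) (s : ℕ) :
    msaBeta n x (s + 1) = msaBeta n x s * selmerBeta n (msaDigit (msaS^[s] x)) := by
  simp [msaBeta, List.range_succ]

section Homogenization

variable {m : ℕ} {x : Fin (m + 1) → ℝ}

lemma ent_last (x : Fin (m + 1) → ℝ) : ent x m = x (Fin.last m) :=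
  ent_val x (Fin.last m)

lemma mem_Bset_iff : x ∈ Bset (m + 1) ↔ Antitone (vecCons 1 x) ∧ 0 ≤ x (Fin.last m) := by
  rw [antitone_vecCons, and_assoc]
  refine and_congr (by rw [← ent_val x 0, Fin.val_zero])
    ⟨fun h => ⟨fun i j hij => ?_, ?_⟩, fun h i j hij => ?_⟩
  · simpa only [ent_val] using h i j hij
  · simpa only [ent_last, ent_of_le x le_rfl] using h m (m + 1) m.le_succ
  · obtain ⟨hanti, hlast⟩ := h
    have ent_nonneg : 0 ≤ ent x i := by
      rcases lt_or_ge i (m + 1) with hi | hi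
      · exact (hlast.trans (hanti (Fin.le_last ⟨i, hi⟩))).trans_eq (ent_val x ⟨i, hi⟩).symm
      · exact (ent_of_le x hi).ge
    rcases lt_or_ge j (m + 1) with hj | hj
    · have hle : (⟨i, hij.trans_lt hj⟩ : Fin (m + 1)) ≤ ⟨j, hj⟩ := hij
      simpa only [← ent_val] using hanti hle
    · exact (ent_of_le x hj).trans_le ent_nonneg

lemma vecCons_one_mem_Icc (hx : x ∈ Bset (m + 1)) (g : Fin (m + 2)) :
    vecCons 1 x g ∈ Set.Icc (x (Fin.last m)) 1 :=
  ⟨(mem_Bset_iff.1 hx).1 (Fin.le_last g), (mem_Bset_iff.1 hx).1 (Fin.zero_le g)⟩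

lemma apply_zero_pos_of_mem_Bset (hx : x ∈ Bset (m + 1)) (hlast : 0 < x (Fin.last m)) :
    0 < x 0 :=
  hlast.trans_le ((antitone_vecCons.1 (mem_Bset_iff.1 hx).1).2 (Fin.zero_le _))

lemma msaDigit_nonneg (hlast : 0 ≤ x (Fin.last m)) : 0 ≤ msaDigit x := by
  rw [msaDigit, add_tsub_cancel_right, ent_last]
  exact Int.floor_nonneg.2 (inv_nonneg.2 hlast)

lemma one_sub_msaDigit_mul_mem_Ico (hlast : 0 < x (Fin.last m)) :
    1 - msaDigit x * x (Fin.last m) ∈ Set.Ico 0 (x (Fin.last m)) := by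
  rw [msaDigit, add_tsub_cancel_right, ent_last, ← one_div]
  exact ⟨Int.sub_floor_div_mul_nonneg 1 hlast, Int.sub_floor_div_mul_lt 1 hlast⟩

lemma inv_one_add_le_of_msaDigit_le {k : ℤ} (hlast : 0 < x (Fin.last m)) (hk : msaDigit x ≤ k) :
    (1 + (k : ℝ))⁻¹ ≤ x (Fin.last m) := by
  rw [msaDigit, add_tsub_cancel_right, ent_last, Int.floor_le_iff, add_comm] at hk
  exact inv_le_of_inv_le₀ hlast hk.le

lemma msaS_last (x : Fin (m + 1) → ℝ) :
    msaS x (Fin.last m) = (1 - msaDigit x * x (Fin.last m)) / x 0 := by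
  simp [msaS, ent_last, ← ent_val x 0]

lemma vecCons_one_msaS (hx0 : x 0 ≠ 0) :
    vecCons 1 (msaS x) =
      (x 0)⁻¹ • (Fin.snoc x (1 - msaDigit x * x (Fin.last m)) : Fin (m + 2) → ℝ) := by
  funext g
  cases g using Fin.lastCases with
  | last =>
    rw [← Fin.succ_last, Matrix.cons_val_succ, Pi.smul_apply, Fin.succ_last, Fin.snoc_last,
      msaS_last, div_eq_inv_mul, smul_eq_mul]
  | cast i =>
    rw [Pi.smul_apply, Fin.snoc_castSucc, smul_eq_mul]
    cases i using Fin.cases with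
    | zero => simp [hx0]
    | succ i =>
      have hif : (i : ℕ) + 1 < m + 1 := Nat.succ_lt_succ i.isLt
      rw [← Fin.succ_castSucc, Matrix.cons_val_succ, msaS, Fin.val_castSucc, if_pos hif,
        ← Fin.val_succ, ent_val, ← ent_val x 0, Fin.val_zero, div_eq_inv_mul]

lemma selmerBeta_mulVec (k : ℤ) (v : Fin (m + 2) → ℝ) :
    selmerBeta (m + 1) k *ᵥ v =
      vecCons (k * v (Fin.last m).castSucc + v (Fin.last (m + 1))) (Fin.init v) := by
  funext i
  cases i using Fin.cases with
  | zero =>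
    have hne : (Fin.last m).castSucc ≠ Fin.last (m + 1) := Fin.castSucc_ne_last _
    rw [Matrix.mulVec, dotProduct, Fintype.sum_eq_add _ _ hne]
    · simp [selmerBeta]
    · rintro g ⟨hg, hg'⟩
      have hgm : (g : ℕ) ≠ m := fun h => hg (Fin.ext h)
      have hgm' : (g : ℕ) ≠ m + 1 := fun h => hg' (Fin.ext h)
      simp [selmerBeta, hgm, hgm']
  | succ i =>
    rw [Matrix.mulVec, dotProduct, Fintype.sum_eq_single i.castSucc]
    · simp [selmerBeta, Fin.init]
    · intro g hg
      have hgi : (g : ℕ) ≠ i := fun h => hg (Fin.ext h)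
      simp [selmerBeta, hgi]

lemma selmerBeta_mulVec_vecCons_one_msaS (hx0 : x 0 ≠ 0) :
    selmerBeta (m + 1) (msaDigit x) *ᵥ vecCons 1 (msaS x) = (x 0)⁻¹ • vecCons 1 x := by
  rw [vecCons_one_msaS hx0, mulVec_smul, selmerBeta_mulVec, Fin.snoc_castSucc, Fin.snoc_last,
    Fin.init_snoc, add_sub_cancel]

lemma msaS_mem_Bset (hx : x ∈ Bset (m + 1)) (hlast : 0 < x (Fin.last m)) :
    msaS x ∈ Bset (m + 1) := by
  obtain ⟨hanti, -⟩ := mem_Bset_iff.1 hx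
  have hx0 : 0 < x 0 := apply_zero_pos_of_mem_Bset hx hlast
  obtain ⟨hrem_nonneg, hrem_lt⟩ := one_sub_msaDigit_mul_mem_Ico hlast
  refine mem_Bset_iff.2 ⟨?_, ?_⟩
  · rw [vecCons_one_msaS hx0.ne']
    exact (antitone_snoc (antitone_vecCons.1 hanti).2 hrem_lt.le).const_smul (inv_nonneg.2 hx0.le)
  · rw [msaS_last]
    exact div_nonneg hrem_nonneg hx0.le

lemma iterate_msaS_mem_Bset (hx : x ∈ Bset (m + 1)) {s : ℕ}
    (horb : ∀ t < s, 0 < (msaS^[t] x) (Fin.last m)) : msaS^[s] x ∈ Bset (m + 1) := by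
  induction s with
  | zero => exact hx
  | succ s ih =>
    rw [Function.iterate_succ_apply']
    exact msaS_mem_Bset (ih fun t ht => horb t (ht.trans s.lt_succ_self)) (horb s s.lt_succ_self)

lemma msaBeta_nonneg {s : ℕ} (horb : ∀ t < s, 0 ≤ (msaS^[t] x) (Fin.last m))
    (i j : Fin (m + 2)) : 0 ≤ msaBeta (m + 1) x s i j := by
  induction s generalizing j with
  | zero =>
    rw [msaBeta_zero, Matrix.one_apply]
    positivity
  | succ s ih =>
    rw [msaBeta_succ, Matrix.mul_apply]
    exact Finset.sum_nonneg fun g _ => mul_nonneg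
      (ih (fun t ht => horb t (ht.trans s.lt_succ_self)) g)
      (selmerBeta_nonneg _ (msaDigit_nonneg (horb s s.lt_succ_self)) g j)

lemma msaBeta_mulVec_vecCons_one_iterate {s : ℕ} (h0 : ∀ t < s, (msaS^[t] x) 0 ≠ 0) :
    msaBeta (m + 1) x s *ᵥ vecCons 1 (msaS^[s] x) =
      (∏ t ∈ Finset.range s, ((msaS^[t] x) 0)⁻¹) • vecCons 1 x := by
  induction s with
  | zero => simp [msaBeta_zero]
  | succ s ih =>
    rw [msaBeta_succ, Function.iterate_succ_apply', ← mulVec_mulVec,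
      selmerBeta_mulVec_vecCons_one_msaS (h0 s s.lt_succ_self), mulVec_smul,
      ih fun t ht => h0 t (ht.trans s.lt_succ_self), smul_smul, Finset.prod_range_succ_comm]

lemma msaBeta_sum_row_div_sum_row_zero_mem_Icc (hx : x ∈ Bset (m + 1)) {s : ℕ}
    (horb : ∀ t ≤ s, 0 < (msaS^[t] x) (Fin.last m)) (i : Fin (m + 1)) :
    (∑ g, msaBeta (m + 1) x s i.succ g) / (∑ g, msaBeta (m + 1) x s 0 g) ∈
      Set.Icc ((msaS^[s] x) (Fin.last m) * x i) (((msaS^[s] x) (Fin.last m))⁻¹ * x i) := by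
  have hmem {t : ℕ} (ht : t ≤ s) : msaS^[t] x ∈ Bset (m + 1) :=
    iterate_msaS_mem_Bset hx fun r hr => horb r (hr.le.trans ht)
  have apply_zero_pos {t : ℕ} (ht : t < s) : 0 < (msaS^[t] x) 0 :=
    apply_zero_pos_of_mem_Bset (hmem ht.le) (horb t ht.le)
  set c := ∏ t ∈ Finset.range s, ((msaS^[t] x) 0)⁻¹
  have hc : 0 < c :=
    Finset.prod_pos fun t ht => inv_pos.2 (apply_zero_pos (Finset.mem_range.1 ht))
  have hmul : msaBeta (m + 1) x s *ᵥ vecCons 1 (msaS^[s] x) = c • vecCons 1 x :=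
    msaBeta_mulVec_vecCons_one_iterate fun t ht => (apply_zero_pos ht).ne'
  have hratio := sum_row_div_sum_row_mem_Icc (i₀ := 0)
    (msaBeta_nonneg fun t ht => (horb t ht.le).le) (horb s le_rfl)
    (vecCons_one_mem_Icc (hmem le_rfl)) i.succ (by simpa [hmul] using hc)
  simpa [hmul, hc.ne'] using hratio

end Homogenization

theorem msa_periodic_row_sum_ratios_general {n : ℕ} {x : Fin n → ℝ} (hx : x ∈ Bset n) {s : ℕ}
    (horb : ∀ t ≤ s, 0 < ent (msaS^[t] x) (n - 1)) {k : ℤ} (hk : msaDigit x ≤ k)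
    (hks : msaDigit (msaS^[s] x) ≤ k) (i : Fin n) :
    1 / (1 + (k : ℝ)) ^ 2 ≤
        (∑ g, msaBeta n x s i.succ g) / (∑ g, msaBeta n x s 0 g) ∧
      (∑ g, msaBeta n x s i.succ g) / (∑ g, msaBeta n x s 0 g) ≤ (1 + (k : ℝ)) ^ 2 := by
  obtain _ | m := n
  · exact i.elim0
  simp only [add_tsub_cancel_right, ent_last] at horb
  have hlast : 0 < x (Fin.last m) := horb 0 s.zero_le
  have hone : 1 ≤ 1 + (k : ℝ) :=
    le_add_of_nonneg_right (Int.cast_nonneg ((msaDigit_nonneg hlast.le).trans hk))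
  have hy : (1 + (k : ℝ))⁻¹ ≤ (msaS^[s] x) (Fin.last m) :=
    inv_one_add_le_of_msaDigit_le (horb s le_rfl) hks
  obtain ⟨hxi, hxi_le_one⟩ : x i ∈ Set.Icc (x (Fin.last m)) 1 := vecCons_one_mem_Icc hx i.succ
  obtain ⟨hlower, hupper⟩ := msaBeta_sum_row_div_sum_row_zero_mem_Icc hx horb i
  constructor
  · calc 1 / (1 + (k : ℝ)) ^ 2
      _ = (1 + (k : ℝ))⁻¹ * (1 + (k : ℝ))⁻¹ := by rw [one_div, ← inv_pow, sq]
      _ ≤ (msaS^[s] x) (Fin.last m) * x i :=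
        mul_le_mul hy ((inv_one_add_le_of_msaDigit_le hlast hk).trans hxi) (by positivity)
          (horb s le_rfl).le
      _ ≤ _ := hlower
  · calc _ ≤ ((msaS^[s] x) (Fin.last m))⁻¹ * x i := hupper
      _ ≤ (1 + (k : ℝ)) * 1 :=
        mul_le_mul (inv_le_of_inv_le₀ (by positivity) hy) hxi_le_one (hlast.le.trans hxi)
          (by positivity)
      _ ≤ (1 + (k : ℝ)) ^ 2 := by rw [mul_one]; exact le_self_pow₀ hone two_ne_zero

/-- **Uniform bounds on the row-sum ratios.** Let `x ∈ B^n` have MSA orbit defined for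
all times with purely periodic expansion `S^p x = x` (`p ≥ 1`), with digits
`k₁, …, k_p`, and set `K = (1 + max(k₁,…,k_p))²`. Then for every `s ≥ 0` and every
`i ∈ {1,…,n}`, `1/K ≤ (Σ_{g=0}^n (β^{(s)})_{i,g}) / (Σ_{g=0}^n (β^{(s)})_{0,g}) ≤ K`;
in particular these ratios are bounded away from `0` and `∞` uniformly in `s`. -/
theorem msa_periodic_row_sum_ratios (n : ℕ) (hn : 1 ≤ n) (x : Fin n → ℝ)
    (hx : x ∈ Bset n) (horb : ∀ s : ℕ, 0 < ent (msaS^[s] x) (n - 1))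
    (p : ℕ) (hp : 1 ≤ p) (hper : msaS^[p] x = x) (kmax : ℤ)
    (hkmax : IsGreatest {d : ℤ | ∃ t : ℕ, t < p ∧ d = msaDigit (msaS^[t] x)} kmax) :
    ∀ s : ℕ, ∀ i : Fin n,
      1 / ((1 + (kmax : ℝ)) ^ 2)
          ≤ (∑ g : Fin (n + 1), msaBeta n x s i.succ g)
            / (∑ g : Fin (n + 1), msaBeta n x s 0 g) ∧
        (∑ g : Fin (n + 1), msaBeta n x s i.succ g)
            / (∑ g : Fin (n + 1), msaBeta n x s 0 g)
          ≤ (1 + (kmax : ℝ)) ^ 2 := by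
  have hdigit : ∀ t, msaDigit (msaS^[t] x) ≤ kmax :=
    forall_iterate_of_isPeriodicPt (msaDigit · ≤ kmax) hp hper fun t ht => hkmax.2 ⟨t, ht, rfl⟩
  exact fun s => msa_periodic_row_sum_ratios_general hx (fun t _ => horb t) (hdigit 0) (hdigit s)
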